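/- Let N : ℕ, let X : ℝ satisfy 0 ≤ X ≤ 1, and let f, g : Fin N → Bool with m := d(f,g). Then ∑_{h : Fin N → Bool} X^(d(f,h) + d(g,h)) = 2^m * X^m * (1 + X^2)^(N - m). (This is the key combinatorial identity in the proof of Lemma 2.) -/

import Mathlib

/-- Hamming distance: the number of indices on which two configurations differ. -/
def hamming {N : ℕ} (f g : Fin N → Bool) : ℕ :=
  (Finset.univ.filter fun i => f i ≠ g i).card

/-! Both `x ^ d(f, h)` and `y ^ d(g, h)` are products over the coordinates, so by distributivity
the sum over all words `h` is the product over the coordinates `i` of a sum over the letters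
`h i`. That sum depends only on whether `f i = g i`. -/

open Fintype (card)

theorem hamming_eq_hammingDist {N : ℕ} (f g : Fin N → Bool) : hamming f g = hammingDist f g :=
  rfl

section Product

variable {ι M : Type*} {β : ι → Type*} [Fintype ι] [∀ i, DecidableEq (β i)] [CommMonoid M]

theorem card_filter_eq_eq_card_sub_hammingDist (f g : ∀ i, β i) :
    (Finset.univ.filter fun i => f i = g i).card = card ι - hammingDist f g :=
  Nat.eq_sub_of_add_eq <|
    Finset.card_filter_add_card_filter_not (s := Finset.univ) fun i => f i = g i

theorem prod_ite_eq_pow_hammingDist (f g : ∀ i, β i) (a b : M) :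
    ∏ i, (if f i = g i then a else b) =
      b ^ hammingDist f g * a ^ (card ι - hammingDist f g) := by
  rw [Finset.prod_ite, Finset.prod_const, Finset.prod_const,
    card_filter_eq_eq_card_sub_hammingDist, mul_comm]
  rfl

theorem pow_hammingDist_eq_prod_ite (f g : ∀ i, β i) (x : M) :
    x ^ hammingDist f g = ∏ i, if f i = g i then 1 else x := by
  rw [prod_ite_eq_pow_hammingDist, one_pow, mul_one]

end Product

section Sum

variable {α R : Type*} [Fintype α] [DecidableEq α] [CommSemiring R]

theorem sum_ite_eq_mul_ite_eq_self (a : α) (x y : R) :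
    ∑ c, (if a = c then 1 else x) * (if a = c then 1 else y) =
      1 + (card α - 1 : ℕ) * (x * y) := by
  have off_a : ∀ c ∈ ({a} : Finset α)ᶜ,
      (if a = c then 1 else x) * (if a = c then 1 else y) = x * y := by
    intro c hc
    have hac : a ≠ c := by simpa [eq_comm] using hc
    rw [if_neg hac, if_neg hac]
  rw [Fintype.sum_eq_add_sum_compl a, Finset.sum_congr rfl off_a, Finset.sum_const,
    Finset.card_compl, Finset.card_singleton, nsmul_eq_mul, if_pos rfl, if_pos rfl, one_mul]

theorem sum_ite_eq_mul_ite_eq_of_ne {a b : α} (hab : a ≠ b) (x y : R) :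
    ∑ c, (if a = c then 1 else x) * (if b = c then 1 else y) =
      x + y + (card α - 2 : ℕ) * (x * y) := by
  have on_ab : ∑ c ∈ {a, b}, (if a = c then 1 else x) * (if b = c then 1 else y) = x + y := by
    simp [Finset.sum_pair hab, hab, hab.symm, add_comm]
  have off_ab : ∀ c ∈ ({a, b} : Finset α)ᶜ,
      (if a = c then 1 else x) * (if b = c then 1 else y) = x * y := by
    intro c hc
    obtain ⟨hac, hbc⟩ : a ≠ c ∧ b ≠ c := by simpa [eq_comm] using hc
    rw [if_neg hac, if_neg hbc]
  rw [← Finset.sum_add_sum_compl {a, b}, on_ab, Finset.sum_congr rfl off_ab, Finset.sum_const,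
    Finset.card_compl, Finset.card_pair hab, nsmul_eq_mul]

theorem sum_ite_eq_mul_ite_eq (a b : α) (x y : R) :
    ∑ c, (if a = c then 1 else x) * (if b = c then 1 else y) =
      if a = b then 1 + (card α - 1 : ℕ) * (x * y)
      else x + y + (card α - 2 : ℕ) * (x * y) := by
  split_ifs with hab
  · rw [← hab, sum_ite_eq_mul_ite_eq_self]
  · exact sum_ite_eq_mul_ite_eq_of_ne hab x y

end Sum

theorem sum_pow_hammingDist_mul_pow_hammingDist {ι R : Type*} {β : ι → Type*} [Fintype ι]
    [DecidableEq ι] [∀ i, Fintype (β i)] [∀ i, DecidableEq (β i)] [CommSemiring R]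
    (f g : ∀ i, β i) (x y : R) :
    ∑ h, x ^ hammingDist f h * y ^ hammingDist g h =
      ∏ i, ∑ c, (if f i = c then 1 else x) * (if g i = c then 1 else y) := by
  simp only [Fintype.prod_sum, Finset.prod_mul_distrib, pow_hammingDist_eq_prod_ite]

-- The truncated subtractions are harmless: `card α - 2` is raised to a nonzero power only if
-- `f` and `g` differ somewhere, and `card α - 1` only if `ι`, hence `α`, is nonempty.
theorem sum_hamming_weight_general {ι α R : Type*} [Fintype ι] [DecidableEq ι] [Fintype α]
    [DecidableEq α] [CommSemiring R] (f g : ι → α) (x y : R) :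
    ∑ h, x ^ hammingDist f h * y ^ hammingDist g h =
      (x + y + (card α - 2 : ℕ) * (x * y)) ^ hammingDist f g *
        (1 + (card α - 1 : ℕ) * (x * y)) ^ (card ι - hammingDist f g) := by
  simp only [sum_pow_hammingDist_mul_pow_hammingDist, sum_ite_eq_mul_ite_eq,
    prod_ite_eq_pow_hammingDist]

/-- The key combinatorial identity in the proof of Lemma 2: with `m = d(f,g)`,
`∑_h X^{d(f,h)+d(g,h)} = 2^m X^m (1+X²)^{N-m}`. -/
theorem sum_hamming_weight (N : ℕ) (X : ℝ) (hX0 : 0 ≤ X) (hX1 : X ≤ 1)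
    (f g : Fin N → Bool) :
    ∑ h : Fin N → Bool, X ^ (hamming f h + hamming g h) =
      2 ^ hamming f g * X ^ hamming f g * (1 + X ^ 2) ^ (N - hamming f g) := by
  simpa [hamming_eq_hammingDist, pow_add, ← two_mul, mul_pow, ← sq] using
    sum_hamming_weight_general f g X X
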